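/- arXiv:1707.05206 — 2 statements merged into one kernel-verified Lean document; each statement's English description precedes it below -/
import Mathlib

section
/- For every real α, ∫_{-∞}^{∞} ₕe(-α x) e^{-x²} dx = √π · (1 + ∑_{r=1}^∞ (h_{2r}/r!) (α/2)^{2r}). -/
open Real MeasureTheory

/-- The `n`-th harmonic number `h_n = ∑_{r=1}^n 1/r`. -/
noncomputable def harm (n : ℕ) : ℝ := ∑ r ∈ Finset.range n, 1 / (r + 1 : ℝ)

/-- The harmonic based exponential function `ₕe(x) = 1 + ∑_{n=1}^∞ h_n x^n / n!`. -/
noncomputable def he (x : ℝ) : ℝ :=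
  1 + ∑' n : ℕ, harm (n + 1) * x ^ (n + 1) / (Nat.factorial (n + 1) : ℝ)

noncomputable def cc (n : ℕ) : ℝ := if n = 0 then 1 else harm n

lemma cc_zero : cc 0 = 1 := by simp [cc]
lemma cc_succ (n : ℕ) : cc (n + 1) = harm (n + 1) := by simp [cc]

lemma cc_nonneg (n : ℕ) : 0 ≤ cc n := by
  unfold cc harm
  split_ifs
  · norm_num
  · positivity

lemma harm_le (n : ℕ) : harm n ≤ n := by
  unfold harm
  calc ∑ r ∈ Finset.range n, 1 / (r + 1 : ℝ) ≤ ∑ r ∈ Finset.range n, (1 : ℝ) := by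
        apply Finset.sum_le_sum
        intro r _
        rw [div_le_one (by positivity)]
        linarith [Nat.cast_nonneg (α := ℝ) r]
    _ = n := by simp

lemma cc_le (n : ℕ) : cc n ≤ 2 ^ n := by
  unfold cc
  split_ifs with h
  · simp [h]
  · refine (harm_le n).trans ?_
    exact_mod_cast (Nat.lt_two_pow_self (n := n)).le

lemma term_bound (n : ℕ) (x : ℝ) :
    ‖cc n * x ^ n / (Nat.factorial n : ℝ)‖ ≤ (2 * |x|) ^ n / (Nat.factorial n : ℝ) := by
  rw [norm_div, norm_mul, norm_pow, Real.norm_eq_abs, Real.norm_eq_abs, Real.norm_eq_abs,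
    abs_of_nonneg (cc_nonneg n), Nat.abs_cast, mul_pow]
  gcongr
  exact cc_le n

lemma exp_hasSum (x : ℝ) : HasSum (fun n : ℕ => x ^ n / (Nat.factorial n : ℝ)) (Real.exp x) := by
  rw [Real.exp_eq_exp_ℝ]
  exact NormedSpace.expSeries_div_hasSum_exp x

lemma he_hasSum (x : ℝ) :
    HasSum (fun n : ℕ => cc n * x ^ n / (Nat.factorial n : ℝ)) (he x) := by
  have hs : Summable (fun n : ℕ => cc n * x ^ n / (Nat.factorial n : ℝ)) :=
    Summable.of_norm_bounded (exp_hasSum (2 * |x|)).summable (fun n => term_bound n x)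
  have h := hs.hasSum
  rw [hs.tsum_eq_zero_add] at h
  simpa [he, cc_zero, cc_succ] using h

lemma int_lin (b : ℝ) : Integrable (fun x : ℝ => Real.exp (b * x) * Real.exp (-x ^ 2)) := by
  have h := ((integrable_exp_neg_mul_sq (b := 1) one_pos).comp_sub_right (b / 2)).const_mul
    (Real.exp (b ^ 2 / 4))
  refine h.congr (Filter.Eventually.of_forall fun x => ?_)
  simp only [← Real.exp_add]
  congr 1
  ring

lemma int_abs (b : ℝ) : Integrable (fun x : ℝ => Real.exp (|b * x|) * Real.exp (-x ^ 2)) := by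
  refine ((int_lin b).add (int_lin (-b))).mono' (by fun_prop) (Filter.Eventually.of_forall ?_)
  intro x
  rw [Real.norm_of_nonneg (by positivity), Pi.add_apply, ← add_mul]
  gcongr
  have := Real.exp_pos (b * x)
  have := Real.exp_pos (-b * x)
  rcases abs_cases (b * x) with ⟨h, _⟩ | ⟨h, _⟩ <;> rw [h]
  · linarith
  · rw [← neg_mul]; linarith

lemma moment_odd (k : ℕ) : ∫ x : ℝ, x ^ (2 * k + 1) * Real.exp (-x ^ 2) = 0 := by
  have h := integral_neg_eq_self (fun x : ℝ => x ^ (2 * k + 1) * Real.exp (-x ^ 2)) volume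
  have e : ∀ x : ℝ, (-x) ^ (2 * k + 1) * Real.exp (-(-x) ^ 2)
      = -(x ^ (2 * k + 1) * Real.exp (-x ^ 2)) := by
    intro x
    rw [Odd.neg_pow ⟨k, rfl⟩, neg_sq]; ring
  simp only [e, integral_neg] at h
  linarith

lemma fact_two (k : ℕ) : ((2 * k).factorial : ℝ)
    = 2 ^ k * k.factorial * ((2 * k - 1).doubleFactorial : ℝ) := by
  rcases k with _ | k
  · simp
  · have h := Nat.factorial_eq_mul_doubleFactorial (2 * k + 1)
    have h2 := Nat.doubleFactorial_two_mul (k + 1)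
    rw [show 2 * (k + 1) - 1 = 2 * k + 1 by omega]
    rw [show 2 * (k + 1) = 2 * k + 1 + 1 by ring] at *
    rw [h, h2]
    push_cast
    ring

lemma moment_even (k : ℕ) : ∫ x : ℝ, x ^ (2 * k) * Real.exp (-x ^ 2)
    = √π * (Nat.factorial (2 * k)) / (4 ^ k * Nat.factorial k) := by
  have h1 := integral_comp_abs (f := fun x : ℝ => x ^ (2 * k) * Real.exp (-x ^ 2))
  simp only [sq_abs, Even.pow_abs (even_two_mul k)] at h1
  have h2 := integral_rpow_mul_exp_neg_rpow (p := 2) (q := (2 * k : ℕ)) (by norm_num)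
    (by have := Nat.cast_nonneg (α := ℝ) (2 * k); linarith)
  have h3 : ((2 * k : ℕ) + 1 : ℝ) / 2 = k + 1 / 2 := by push_cast; ring
  simp only [Real.rpow_natCast, Real.rpow_ofNat] at h2
  rw [h1, h2, h3, Real.Gamma_nat_add_half, fact_two]
  have : (4 : ℝ) ^ k = 2 ^ k * 2 ^ k := by rw [← mul_pow]; norm_num
  rw [this]
  field_simp

lemma main_hasSum (α : ℝ) :
    HasSum (fun n : ℕ => ∫ x : ℝ, cc n * (-α * x) ^ n / (Nat.factorial n : ℝ) * Real.exp (-x ^ 2))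
      (∫ x : ℝ, he (-α * x) * Real.exp (-x ^ 2)) := by
  have hb : ∀ x : ℝ, HasSum (fun n : ℕ => |2 * α * x| ^ n / (Nat.factorial n : ℝ)
      * Real.exp (-x ^ 2)) (Real.exp (|2 * α * x|) * Real.exp (-x ^ 2)) :=
    fun x => (exp_hasSum _).mul_right _
  apply hasSum_integral_of_dominated_convergence
    (fun n x => |2 * α * x| ^ n / (Nat.factorial n : ℝ) * Real.exp (-x ^ 2))
  · intro n
    fun_prop
  · intro n
    refine Filter.Eventually.of_forall fun x => ?_
    rw [norm_mul, Real.norm_of_nonneg (Real.exp_pos _).le]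
    gcongr
    refine (term_bound n _).trans_eq ?_
    simp [abs_mul, mul_assoc]
  · exact Filter.Eventually.of_forall fun x => (hb x).summable
  · simp only [fun x => (hb x).tsum_eq]
    exact int_abs (2 * α)
  · exact Filter.Eventually.of_forall fun x => (he_hasSum _).mul_right _

lemma term_eq (α : ℝ) (n : ℕ) :
    ∫ x : ℝ, cc n * (-α * x) ^ n / (Nat.factorial n : ℝ) * Real.exp (-x ^ 2)
    = cc n * (-α) ^ n / (Nat.factorial n : ℝ) * ∫ x : ℝ, x ^ n * Real.exp (-x ^ 2) := by
  rw [← integral_const_mul]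
  congr 1
  ext x
  rw [mul_pow]
  ring

lemma even_hasSum (α : ℝ) :
    HasSum (fun r : ℕ => √π * (cc (2 * r) / (Nat.factorial r : ℝ) * (α / 2) ^ (2 * r)))
      (∫ x : ℝ, he (-α * x) * Real.exp (-x ^ 2)) := by
  have hinj : Function.Injective (fun r : ℕ => 2 * r) := fun a b h => by simpa using h
  have h := (hinj.hasSum_iff ?_).2 (main_hasSum α)
  · convert! h using 1
    ext r
    simp only [Function.comp, term_eq, moment_even]
    rw [Even.neg_pow (even_two_mul r), div_pow, pow_mul 2 2 r]
    have : ((2 * r).factorial : ℝ) ≠ 0 := by positivity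
    norm_num
    field_simp
  · intro n hn
    rcases Nat.even_or_odd' n with ⟨k, rfl | rfl⟩
    · exact absurd ⟨k, rfl⟩ hn
    · rw [term_eq, moment_odd, mul_zero]

/-- `∫_{-∞}^{∞} ₕe(-αx) e^{-x²} dx = √π (1 + ∑_{r=1}^∞ (h_{2r}/r!)(α/2)^{2r})`. -/
theorem he_gaussian_integral (α : ℝ) :
    (∫ x : ℝ, he (-α * x) * Real.exp (-x ^ 2)) =
      Real.sqrt π *
        (1 + ∑' r : ℕ,
          harm (2 * (r + 1)) / (Nat.factorial (r + 1) : ℝ) * (α / 2) ^ (2 * (r + 1))) := by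
  have h := even_hasSum α
  have hp : √π ≠ 0 := by positivity
  have hs := (summable_mul_left_iff hp).1 h.summable
  rw [← h.tsum_eq, tsum_mul_left, hs.tsum_eq_zero_add]
  simp [cc_zero, show ∀ r, cc (2 * (r + 1)) = harm (2 * (r + 1)) from fun r => cc_succ _]
end

section
/- The harmonic based exponential function y(x) = ₕe(x) is differentiable on ℝ \ {0} and satisfies there the differential equation y'(x) = y(x) + (e^x - 1 - x)/x. -/
open Real MeasureTheory

lemma harm_nonneg' (n : ℕ) : 0 ≤ harm n := by
  unfold harm; positivity

lemma harm_succ' (n : ℕ) : harm (n + 1) = harm n + 1 / (n + 1 : ℝ) := by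
  unfold harm; rw [Finset.sum_range_succ]

lemma harm_succ_le (n : ℕ) : harm (n + 1) ≤ 2 ^ n := by
  have h1 : harm (n + 1) ≤ (n + 1 : ℝ) := by
    induction n with
    | zero => simp [harm]
    | succ k ih =>
      rw [harm_succ']
      have : 1 / (((k + 1 : ℕ) : ℝ) + 1) ≤ 1 := by
        rw [div_le_one (by positivity)]
        have : (0 : ℝ) ≤ ((k + 1 : ℕ) : ℝ) := by positivity
        linarith
      push_cast at *
      linarith
  have h2 : n + 1 ≤ 2 ^ n := Nat.lt_two_pow_self
  have h3 : (n + 1 : ℝ) ≤ 2 ^ n := by exact_mod_cast h2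
  linarith

lemma he_bound (n : ℕ) (y R : ℝ) (hy : |y| ≤ R) :
    ‖harm (n + 1) * y ^ n / (Nat.factorial n : ℝ)‖ ≤ (2 * R) ^ n / (Nat.factorial n : ℝ) := by
  rw [norm_div, norm_mul, norm_pow, Real.norm_eq_abs, Real.norm_eq_abs, Real.norm_eq_abs,
    abs_of_nonneg (harm_nonneg' _), abs_of_nonneg (show (0 : ℝ) ≤ (Nat.factorial n : ℝ) by positivity), mul_pow]
  have := harm_succ_le n
  gcongr

lemma he_hasDerivAt (x : ℝ) :
    HasDerivAt he (∑' n : ℕ, harm (n + 1) * x ^ n / (Nat.factorial n : ℝ)) x := by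
  unfold he
  refine HasDerivAt.const_add 1 ?_
  refine hasDerivAt_tsum_of_isPreconnected (t := Metric.ball (0 : ℝ) (|x| + 1)) (y₀ := 0)
    (Real.summable_pow_div_factorial (2 * (|x| + 1))) Metric.isOpen_ball
    (convex_ball _ _).isPreconnected
    (g := fun n z => harm (n + 1) * z ^ (n + 1) / (Nat.factorial (n + 1) : ℝ))
    (g' := fun n z => harm (n + 1) * z ^ n / (Nat.factorial n : ℝ)) ?_ ?_ ?_ ?_ ?_
  · intro n y _
    have h := ((hasDerivAt_pow (n + 1) y).const_mul (harm (n + 1))).div_const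
      (Nat.factorial (n + 1) : ℝ)
    refine h.congr_deriv ?_
    have : (Nat.factorial n : ℝ) ≠ 0 := by positivity
    rw [Nat.factorial_succ]
    push_cast
    field_simp
  · intro n y hy
    rw [mem_ball_zero_iff, Real.norm_eq_abs] at hy
    exact he_bound n y _ hy.le
  · simp; positivity
  · simp
  · simp

theorem he_ode (x : ℝ) (hx : x ≠ 0) :
    DifferentiableAt ℝ he x ∧
    deriv he x = he x + (Real.exp x - 1 - x) / x := by
  refine ⟨(he_hasDerivAt x).differentiableAt, ?_⟩
  rw [(he_hasDerivAt x).deriv]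
  have hS : Summable fun n : ℕ => harm (n + 1) * x ^ n / (Nat.factorial n : ℝ) :=
    Summable.of_norm_bounded (Real.summable_pow_div_factorial (2 * |x|))
      fun n => he_bound n x _ le_rfl
  have hE : HasSum (fun n : ℕ => x ^ (n + 1) / (Nat.factorial (n + 1) : ℝ)) (Real.exp x - 1) := by
    have h : HasSum (fun n : ℕ => x ^ n / (Nat.factorial n : ℝ)) (Real.exp x) := by
      rw [Real.exp_eq_exp_ℝ]
      exact NormedSpace.expSeries_div_hasSum_exp x
    simpa using (hasSum_nat_add_iff' 1).2 h
  have hE2 : HasSum (fun n : ℕ => x ^ n / (Nat.factorial (n + 1) : ℝ)) ((Real.exp x - 1) / x) := by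
    refine (hE.div_const x).congr_fun ?_
    intro n
    field_simp
    ring
  have hsplit : ∀ n : ℕ, harm n * x ^ n / (Nat.factorial n : ℝ)
      = harm (n + 1) * x ^ n / (Nat.factorial n : ℝ) - x ^ n / (Nat.factorial (n + 1) : ℝ) := by
    intro n
    have : (Nat.factorial n : ℝ) ≠ 0 := by positivity
    rw [harm_succ', Nat.factorial_succ]
    push_cast
    field_simp
    ring
  have hH : HasSum (fun n : ℕ => harm n * x ^ n / (Nat.factorial n : ℝ))
      ((∑' n : ℕ, harm (n + 1) * x ^ n / (Nat.factorial n : ℝ)) - (Real.exp x - 1) / x) := by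
    simp_rw [hsplit]
    exact hS.hasSum.sub hE2
  have h0 := hH.summable.tsum_eq_zero_add
  rw [hH.tsum_eq] at h0
  have hz : harm 0 = 0 := by simp [harm]
  rw [hz, zero_mul, zero_div, zero_add] at h0
  unfold he
  rw [← h0]
  field_simp
  ring
end
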